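/- arXiv:1305.2142 — 2 statements merged into one kernel-verified Lean document; each statement's English description precedes it below -/
import Mathlib

section
/- For all integers n ≥ 1 and r ≥ 1, 𝓗^{(r)}_0(0) = η_r; equivalently, (1/r)·∑_{j=1}^{r} 𝔰_j·(∂H^{(r)}/∂y_j)(𝔰_1,…,𝔰_r) = η_r holds in ℚ[α_1,…,α_n]. -/
/-!
Setting: in `MvPolynomial (Fin n) ℚ`, `esymm` is the elementary symmetric polynomial `𝔰_r`,
`hsymm` is the complete homogeneous symmetric polynomial `η_r`, and `psum` is the power sum
`p_r`.  The polynomial `H = H^{(r)} ∈ ℚ[y₁,…,y_r]` is characterized by the hypothesis that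
`p_r = H(e₁,…,e_r)` holds in any number `N ≥ r` of variables.
-/

noncomputable section

open MvPolynomial

namespace SQ

lemma coeff_agree {R : Type*} [CommRing R] (r : ℕ) (E₁ E₂ F₁ F₂ G₁ G₂ : PowerSeries R)
    (h0 : PowerSeries.constantCoeff E₁ = 1)
    (h1 : E₁ * F₁ = G₁) (h2 : E₂ * F₂ = G₂)
    (hE : ∀ m < r + 1, PowerSeries.coeff m E₁ = PowerSeries.coeff m E₂)
    (hG : ∀ m < r + 1, PowerSeries.coeff m G₁ = PowerSeries.coeff m G₂) :
    PowerSeries.coeff r F₁ = PowerSeries.coeff r F₂ := by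
  have hE' : (PowerSeries.X : PowerSeries R) ^ (r + 1) ∣ E₁ - E₂ := by
    rw [PowerSeries.X_pow_dvd_iff]
    intro m hm
    rw [map_sub, hE m hm, sub_self]
  have hG' : (PowerSeries.X : PowerSeries R) ^ (r + 1) ∣ G₁ - G₂ := by
    rw [PowerSeries.X_pow_dvd_iff]
    intro m hm
    rw [map_sub, hG m hm, sub_self]
  have hu : IsUnit E₁ := by
    rw [PowerSeries.isUnit_iff_constantCoeff, h0]
    exact isUnit_one
  have h : (PowerSeries.X : PowerSeries R) ^ (r + 1) ∣ E₁ * (F₁ - F₂) := by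
    have : E₁ * (F₁ - F₂) = (G₁ - G₂) - (E₁ - E₂) * F₂ := by
      rw [← h1, ← h2]; ring
    rw [this]
    exact dvd_sub hG' (hE'.mul_right _)
  rw [hu.dvd_mul_left, PowerSeries.X_pow_dvd_iff] at h
  have := h r (by omega)
  rwa [map_sub, sub_eq_zero] at this

/-- generating series of elementary symmetric polynomials -/
def EG (n : ℕ) : PowerSeries (MvPolynomial (Fin n) ℚ) :=
  PowerSeries.mk fun k => (-1) ^ k * esymm (Fin n) ℚ k

lemma EG_eq (n : ℕ) :
    EG n = ∏ i : Fin n, (1 + PowerSeries.C (-(X i : MvPolynomial (Fin n) ℚ)) * PowerSeries.X) := by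
  ext1 k
  rw [Finset.prod_one_add, map_sum, EG, PowerSeries.coeff_mk, esymm, Finset.mul_sum]
  rw [Finset.powersetCard_eq_filter, Finset.sum_filter]
  refine Finset.sum_congr rfl fun t _ => ?_
  rw [Finset.prod_mul_distrib, Finset.prod_const, ← map_prod, PowerSeries.coeff_C_mul,
    PowerSeries.coeff_X_pow]
  by_cases h : t.card = k
  · rw [if_pos h, if_pos h.symm, mul_one, Finset.prod_neg, h]
  · rw [if_neg h, if_neg (Ne.symm h), mul_zero]

lemma hsymm_eq (n k : ℕ) : hsymm (Fin n) ℚ k =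
    PowerSeries.coeff k
      (∏ i : Fin n, PowerSeries.mk fun m => (X i : MvPolynomial (Fin n) ℚ) ^ m) := by
  rw [PowerSeries.coeff_prod, hsymm]
  simp only [PowerSeries.coeff_mk]
  refine Finset.sum_bij (fun s _ => Multiset.toFinsupp s.1) ?_ ?_ ?_ ?_
  · intro s _
    rw [Finset.mem_finsuppAntidiag]
    refine ⟨?_, Finset.subset_univ _⟩
    change ∑ a : Fin n, Multiset.count a s.1 = k
    rw [Multiset.sum_count_eq_card (fun a _ => Finset.mem_univ a)]
    exact s.2
  · intro a _ b _ h
    exact Subtype.ext (Multiset.toFinsupp.injective h)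
  · intro f hf
    rw [Finset.mem_finsuppAntidiag'] at hf
    refine ⟨⟨Finsupp.toMultiset f, ?_⟩, Finset.mem_univ _, ?_⟩
    · rw [Finsupp.card_toMultiset]
      exact hf.1
    · exact Finsupp.toMultiset_toFinsupp f
  · intro s _
    rw [Finset.prod_multiset_map_count]
    simp only [Multiset.toFinsupp_apply]
    refine Finset.prod_subset (Finset.subset_univ _) fun x _ hx => ?_
    rw [Multiset.mem_toFinset] at hx
    rw [Multiset.count_eq_zero_of_notMem hx, pow_zero]

lemma EG_mul_HG (n : ℕ) : EG n * PowerSeries.mk (hsymm (Fin n) ℚ) = 1 := by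
  have : PowerSeries.mk (hsymm (Fin n) ℚ) =
      (∏ i : Fin n, PowerSeries.mk fun m => (X i : MvPolynomial (Fin n) ℚ) ^ m) := by
    ext1 k
    rw [PowerSeries.coeff_mk, hsymm_eq]
  rw [this, EG_eq, ← Finset.prod_mul_distrib]
  refine Finset.prod_eq_one fun i _ => ?_
  ext1 k
  cases k with
  | zero => simp
  | succ k =>
    rw [add_mul, one_mul, map_add, mul_assoc, PowerSeries.coeff_C_mul,
      PowerSeries.coeff_succ_X_mul]
    simp [PowerSeries.coeff_one, pow_succ']

lemma EG_mul_PG (n : ℕ) :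
    EG n * PowerSeries.mk (fun k => if k = 0 then 0 else psum (Fin n) ℚ k) =
      -(PowerSeries.X * PowerSeries.derivative _ (EG n)) := by
  ext1 k
  rw [PowerSeries.coeff_mul]
  cases k with
  | zero => simp
  | succ k =>
    rw [map_neg, PowerSeries.coeff_succ_X_mul, PowerSeries.coeff_derivative]
    simp only [EG, PowerSeries.coeff_mk]
    have h := mul_esymm_eq_sum (Fin n) ℚ (k + 1)
    have h2 : ∑ p ∈ Finset.HasAntidiagonal.antidiagonal (k + 1), (-1) ^ p.1 * esymm (Fin n) ℚ p.1 *
        (if p.2 = 0 then 0 else psum (Fin n) ℚ p.2) =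
        ∑ a ∈ Finset.HasAntidiagonal.antidiagonal (k + 1) with a.1 < k + 1,
          (-1) ^ a.1 * esymm (Fin n) ℚ a.1 * psum (Fin n) ℚ a.2 := by
      rw [Finset.sum_filter]
      refine Finset.sum_congr rfl fun p hp => ?_
      rw [Finset.HasAntidiagonal.mem_antidiagonal] at hp
      by_cases h0 : p.2 = 0
      · rw [if_pos h0, if_neg (by omega), mul_zero]
      · rw [if_neg h0, if_pos (by omega)]
    rw [h2]
    generalize (∑ a ∈ Finset.HasAntidiagonal.antidiagonal (k + 1) with a.1 < k + 1,
          (-1) ^ a.1 * esymm (Fin n) ℚ a.1 * psum (Fin n) ℚ a.2) = S at h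
    have hs : ((-1 : MvPolynomial (Fin n) ℚ) ^ k) * (-1) ^ k = 1 := by
      rw [← mul_pow]; simp
    push_cast at h
    simp only [pow_succ] at h ⊢
    linear_combination (-(-1) ^ k) * h - S * hs

/-- coefficientwise application of a derivation -/
lemma map_deriv_mul {A : Type*} [CommRing A] [Algebra ℚ A] (D : Derivation ℚ A A)
    (f g : PowerSeries A) :
    (PowerSeries.mk fun k => D (PowerSeries.coeff k (f * g))) =
      f * (PowerSeries.mk fun k => D (PowerSeries.coeff k g)) +
      g * (PowerSeries.mk fun k => D (PowerSeries.coeff k f)) := by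
  ext1 k
  rw [mul_comm g, map_add, PowerSeries.coeff_mk, PowerSeries.coeff_mul, PowerSeries.coeff_mul,
    PowerSeries.coeff_mul, map_sum, ← Finset.sum_add_distrib]
  refine Finset.sum_congr rfl fun p _ => ?_
  rw [Derivation.leibniz, PowerSeries.coeff_mk, PowerSeries.coeff_mk, smul_eq_mul, smul_eq_mul]
  ring

/-- generic series -/
def E (r : ℕ) : PowerSeries (MvPolynomial (Fin r) ℚ) :=
  PowerSeries.mk fun k => if k = 0 then 1 else
    if h : k - 1 < r then (-1) ^ k * X ⟨k - 1, h⟩ else 0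

def D (r : ℕ) : Derivation ℚ (MvPolynomial (Fin r) ℚ) (MvPolynomial (Fin r) ℚ) :=
  mkDerivation ℚ X

lemma D_apply (r : ℕ) (f : MvPolynomial (Fin r) ℚ) : D r f = ∑ j, X j * pderiv j f := by
  have hs : ∀ g : MvPolynomial (Fin r) ℚ,
      (∑ j, (X j : MvPolynomial (Fin r) ℚ) • (pderiv j : Derivation ℚ _ _)) g =
        ∑ j, X j * pderiv j g := by
    intro g
    have := congrFun (map_sum (Derivation.coeFnAddMonoidHom (R := ℚ))
      (fun j => (X j : MvPolynomial (Fin r) ℚ) • pderiv j) Finset.univ) g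
    rw [Finset.sum_apply] at this
    exact this
  have : D r = ∑ j, (X j : MvPolynomial (Fin r) ℚ) • pderiv j := by
    refine MvPolynomial.derivation_ext fun i => ?_
    rw [D, mkDerivation_X, hs, Finset.sum_eq_single i]
    · simp
    · intro j _ hj
      simp [pderiv_X, Pi.single_apply, hj]
    · simp
  rw [this, hs]

lemma D_E (r : ℕ) : (PowerSeries.mk fun k => D r (PowerSeries.coeff k (E r))) = E r - 1 := by
  ext1 k
  rw [PowerSeries.coeff_mk, map_sub, PowerSeries.coeff_one, E, PowerSeries.coeff_mk]
  by_cases hk : k = 0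
  · simp [hk]
  · simp only [hk, if_false, sub_zero]
    split_ifs with h
    · have : ((-1 : MvPolynomial (Fin r) ℚ) ^ k) = C ((-1) ^ k) := by simp
      rw [this, C_mul', Derivation.map_smul, D, mkDerivation_X]
    · simp

lemma E_const (r : ℕ) : PowerSeries.constantCoeff (E r) = 1 := by
  rw [← PowerSeries.coeff_zero_eq_constantCoeff_apply]
  simp [E]

lemma map_E (n r m : ℕ) (hm : m < r + 1) :
    PowerSeries.coeff m (PowerSeries.map
      (MvPolynomial.aeval (fun j : Fin r => esymm (Fin n) ℚ ((j : ℕ) + 1)) :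
        MvPolynomial (Fin r) ℚ →ₐ[ℚ] _).toRingHom (E r)) = PowerSeries.coeff m (EG n) := by
  rw [PowerSeries.coeff_map, E, EG, PowerSeries.coeff_mk, PowerSeries.coeff_mk]
  by_cases hk : m = 0
  · simp [hk]
  · rw [if_neg hk, dif_pos (by omega)]
    have : m - 1 + 1 = m := by omega
    simp [this]

lemma exists_generic (r : ℕ) : ∃ hh P : PowerSeries (MvPolynomial (Fin r) ℚ),
    E r * hh = 1 ∧ E r * P = -(PowerSeries.X * PowerSeries.derivative _ (E r)) ∧
    ∀ k, D r (PowerSeries.coeff k P) = k * PowerSeries.coeff k hh := by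
  obtain ⟨hh, hh1⟩ : ∃ hh, E r * hh = 1 := by
    have hu : IsUnit (E r) := by
      rw [PowerSeries.isUnit_iff_constantCoeff, E_const]
      exact isUnit_one
    exact hu.exists_right_inv
  set E' := PowerSeries.derivative _ (E r) with hE'
  set h' := PowerSeries.derivative _ hh with hh'
  have hdh : E r * h' + hh * E' = 0 := by
    have := congrArg (PowerSeries.derivative _) hh1
    rw [Derivation.leibniz, Derivation.map_one_eq_zero] at this
    simpa using this
  refine ⟨hh, -(PowerSeries.X * E') * hh, hh1, ?_, ?_⟩
  · linear_combination (-(PowerSeries.X * E')) * hh1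
  · have e1 := map_deriv_mul (D r) (E r) hh
    have e2 := map_deriv_mul (D r) (-(PowerSeries.X * E')) hh
    have e3 : (PowerSeries.mk fun k => D r (PowerSeries.coeff k (-(PowerSeries.X * E')))) =
        -(PowerSeries.X * E') := by
      ext1 k
      rw [PowerSeries.coeff_mk]
      cases k with
      | zero => simp
      | succ k =>
        rw [map_neg, PowerSeries.coeff_succ_X_mul, hE', PowerSeries.coeff_derivative, map_neg]
        have := congrArg (PowerSeries.coeff (k + 1)) (D_E r)
        rw [PowerSeries.coeff_mk, map_sub, PowerSeries.coeff_one, if_neg (by omega),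
          sub_zero] at this
        have h2 : ((k : MvPolynomial (Fin r) ℚ) + 1) = ((k + 1 : ℕ) : MvPolynomial (Fin r) ℚ) := by
          push_cast; rfl
        rw [h2, mul_comm, ← nsmul_eq_mul, map_nsmul, this]
    have e4 : (PowerSeries.mk fun k => D r (PowerSeries.coeff k
        (1 : PowerSeries (MvPolynomial (Fin r) ℚ)))) = 0 := by
      ext1 k
      rw [PowerSeries.coeff_mk, PowerSeries.coeff_one]
      split_ifs <;> simp
    rw [hh1, e4, D_E] at e1
    rw [e3] at e2
    set Dh := PowerSeries.mk fun k => D r (PowerSeries.coeff k hh)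
    have e5 : -(PowerSeries.X * E') * Dh + hh * -(PowerSeries.X * E') = PowerSeries.X * h' := by
      have e6 : Dh = hh * hh - hh := by
        linear_combination (-hh) * e1 + (-Dh - hh) * hh1
      have e7 : h' = - (hh * hh * E') := by
        linear_combination hh * hdh - h' * hh1
      rw [e6, e7]; ring
    intro k
    have := congrArg (PowerSeries.coeff k) (e2.trans e5)
    rw [PowerSeries.coeff_mk] at this
    rw [this]
    cases k with
    | zero => simp
    | succ k =>
      rw [PowerSeries.coeff_succ_X_mul, hh', PowerSeries.coeff_derivative]
      push_cast; ring

/-- `𝓗^{(r)}_0(0) = η_r`, in the explicit form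
`(1/r)·∑_{j=1}^{r} 𝔰_j·(∂H^{(r)}/∂y_j)(𝔰₁,…,𝔰_r) = η_r` in `ℚ[α₁,…,αₙ]`. -/
theorem statement6 (n : ℕ) (hn : 1 ≤ n) (r : ℕ) (hr : 1 ≤ r)
    (H : MvPolynomial (Fin r) ℚ)
    (hH : ∀ N : ℕ, r ≤ N →
        MvPolynomial.aeval (fun j : Fin r => esymm (Fin N) ℚ ((j : ℕ) + 1)) H
          = psum (Fin N) ℚ r) :
    C ((r : ℚ))⁻¹
        * ∑ j : Fin r,
            esymm (Fin n) ℚ ((j : ℕ) + 1)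
              * MvPolynomial.aeval (fun k : Fin r => esymm (Fin n) ℚ ((k : ℕ) + 1))
                  (pderiv j H)
      = hsymm (Fin n) ℚ r := by
  obtain ⟨hh, P, h1, h2, h3⟩ := exists_generic r
  have hHP : H = PowerSeries.coeff r P := by
    apply esymmAlgHom_fin_injective ℚ (le_refl r)
    apply Subtype.ext
    rw [esymmAlgHom_apply, esymmAlgHom_apply, hH r le_rfl]
    have h2' := congrArg (PowerSeries.map
      (MvPolynomial.aeval (fun j : Fin r => esymm (Fin r) ℚ ((j : ℕ) + 1)) :
        MvPolynomial (Fin r) ℚ →ₐ[ℚ] _).toRingHom) h2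
    rw [map_mul] at h2'
    have := coeff_agree r _ _ _ _ _ _ ?_ h2' (EG_mul_PG r) (map_E r r) ?_
    · rw [PowerSeries.coeff_map, PowerSeries.coeff_mk, if_neg (by omega)] at this
      exact this.symm
    · rw [← PowerSeries.coeff_zero_eq_constantCoeff_apply, map_E r r 0 (by omega)]
      simp [EG]
    · intro m hm
      rw [PowerSeries.coeff_map]
      cases m with
      | zero => simp
      | succ m =>
        have hE := map_E r r (m + 1) hm
        rw [PowerSeries.coeff_map] at hE
        rw [map_neg, map_neg, map_neg, PowerSeries.coeff_succ_X_mul, PowerSeries.coeff_succ_X_mul,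
          PowerSeries.coeff_derivative, PowerSeries.coeff_derivative, map_mul, hE]
        simp
  have key := coeff_agree r _ _ _ _ _ _ ?_ (by
      have h1' := congrArg (PowerSeries.map
        (MvPolynomial.aeval (fun j : Fin r => esymm (Fin n) ℚ ((j : ℕ) + 1)) :
        MvPolynomial (Fin r) ℚ →ₐ[ℚ] _).toRingHom) h1
      rw [map_mul, map_one] at h1'
      exact h1') (EG_mul_HG n) (map_E n r) (fun _ _ => rfl)
  · rw [PowerSeries.coeff_map, PowerSeries.coeff_mk] at key
    have h4 := h3 r
    rw [← hHP, D_apply] at h4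
    have h5 := congrArg (MvPolynomial.aeval (fun j : Fin r => esymm (Fin n) ℚ ((j : ℕ) + 1)) :
        MvPolynomial (Fin r) ℚ →ₐ[ℚ] _) h4
    simp only [map_sum, map_mul, aeval_X, map_natCast] at h5
    rw [h5, ← key, ← mul_assoc]
    have : (C ((r : ℚ))⁻¹ * (r : MvPolynomial (Fin n) ℚ)) = 1 := by
      rw [← map_natCast (C : ℚ →+* MvPolynomial (Fin n) ℚ), ← C_mul, inv_mul_cancel₀, C_1]
      exact_mod_cast (by omega : r ≠ 0)
    rw [this, one_mul]
    rfl
  · rw [← PowerSeries.coeff_zero_eq_constantCoeff_apply, map_E n r 0 (by omega)]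
    simp [EG]

end SQ
end
end

section
/- For all integers n ≥ 1, ν ≥ 1 and r ≥ 0, 𝓗^{(r)}_ν(0) = η_r; equivalently, ((−1)^{ν+1}/(r+ν))·(∂H^{(r+ν)}/∂y_ν)(𝔰_1,…,𝔰_{r+ν}) = η_r holds in ℚ[α_1,…,α_n]. -/
/-!
Setting: in `MvPolynomial (Fin n) ℚ`, `esymm` is the elementary symmetric polynomial `𝔰_r`,
`hsymm` is the complete homogeneous symmetric polynomial `η_r`, and `psum` is the power sum
`p_r`.  The polynomial `H = H^{(r+ν)} ∈ ℚ[y₁,…,y_{r+ν}]` is characterized by the hypothesis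
that `p_{r+ν} = H(e₁,…,e_{r+ν})` holds in any number `N ≥ r+ν` of variables.
-/

noncomputable section

open MvPolynomial

namespace SQ

open PowerSeries in
lemma aux_geom {A : Type*} [CommRing A] (x : A) :
    (1 + PowerSeries.C (-x) * PowerSeries.X) * PowerSeries.mk (fun k => x ^ k) = 1 := by
  ext k
  cases k with
  | zero => simp
  | succ k =>
    rw [add_mul, one_mul, mul_assoc, map_add, PowerSeries.coeff_C_mul,
      PowerSeries.coeff_succ_X_mul]
    simp [PowerSeries.coeff_one, pow_succ]
    ring

/-- signed generating series of elementary symmetric polynomials -/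
def eSer (n : ℕ) : PowerSeries (MvPolynomial (Fin n) ℚ) :=
  PowerSeries.mk fun k => (-1) ^ k * esymm (Fin n) ℚ k

lemma eSer_prod (n : ℕ) :
    eSer n = ∏ i : Fin n, (1 + PowerSeries.C (-(X i : MvPolynomial (Fin n) ℚ)) * PowerSeries.X) := by
  rw [Finset.prod_one_add]
  ext1 k
  rw [map_sum]
  have h : ∀ t : Finset (Fin n), PowerSeries.coeff k (∏ i ∈ t,
      (PowerSeries.C (-(X i : MvPolynomial (Fin n) ℚ)) * PowerSeries.X))
      = if t.card = k then (-1) ^ k * ∏ i ∈ t, (X i : MvPolynomial (Fin n) ℚ) else 0 := by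
    intro t
    rw [Finset.prod_mul_distrib, Finset.prod_const, ← map_prod, PowerSeries.coeff_C_mul,
      PowerSeries.coeff_X_pow, Finset.prod_neg]
    by_cases hk : k = t.card
    · simp [hk]
    · simp [hk, Ne.symm hk]
  rw [Finset.sum_congr rfl (fun t _ => h t), ← Finset.sum_filter, eSer, PowerSeries.coeff_mk,
    esymm, Finset.mul_sum]
  apply Finset.sum_congr _ (fun _ _ => rfl)
  ext t
  simp

lemma hSer_prod (n : ℕ) :
    PowerSeries.mk (fun k => hsymm (Fin n) ℚ k)
      = ∏ i : Fin n, PowerSeries.mk (fun k => (X i : MvPolynomial (Fin n) ℚ) ^ k) := by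
  ext1 k
  rw [PowerSeries.coeff_prod, PowerSeries.coeff_mk, hsymm]
  simp only [PowerSeries.coeff_mk]
  refine Finset.sum_bij' (fun s _ => Multiset.toFinsupp s.1)
    (fun l hl => ⟨Finsupp.toMultiset l, ?_⟩) ?_ ?_ ?_ ?_ ?_
  · rw [Finset.mem_finsuppAntidiag] at hl
    rw [Finsupp.card_toMultiset, ← hl.1]
    exact Finsupp.sum_fintype _ _ (fun _ => rfl)
  · intro s _
    rw [Finset.mem_finsuppAntidiag]
    refine ⟨?_, Finset.subset_univ _⟩
    have h := Multiset.sum_count_eq_card (s := Finset.univ) (m := s.1) (fun _ _ => Finset.mem_univ _)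
    exact h.trans s.2
  · intro _ _
    exact Finset.mem_univ _
  · intro s _
    apply Subtype.ext
    simp
  · intro l _
    simp
  · intro s _
    rw [Finset.prod_multiset_map_count]
    simp only [Multiset.toFinsupp_apply]
    apply Finset.prod_subset (Finset.subset_univ _)
    intro x _ hx
    have : Multiset.count x s.1 = 0 := by
      rw [Multiset.count_eq_zero]; simpa using hx
    rw [this, pow_zero]

lemma eSer_mul_hSer (n : ℕ) :
    eSer n * PowerSeries.mk (fun k => hsymm (Fin n) ℚ k) = 1 := by
  rw [eSer_prod, hSer_prod, ← Finset.prod_mul_distrib]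
  exact Finset.prod_eq_one (fun i _ => aux_geom _)

lemma newton (n : ℕ) :
    PowerSeries.derivative _ (eSer n)
      + eSer n * PowerSeries.mk (fun k => psum (Fin n) ℚ (k + 1)) = 0 := by
  ext1 k
  have h := mul_esymm_eq_sum (Fin n) ℚ (k + 1)
  have h2 : ∑ a ∈ Finset.HasAntidiagonal.antidiagonal (k + 1) with a.1 < k + 1,
      (-1) ^ a.1 * esymm (Fin n) ℚ a.1 * psum (Fin n) ℚ a.2
      = ∑ a ∈ Finset.HasAntidiagonal.antidiagonal k,
      (-1) ^ a.1 * esymm (Fin n) ℚ a.1 * psum (Fin n) ℚ (a.2 + 1) := by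
    rw [Finset.sum_filter, Finset.Nat.antidiagonal_succ', Finset.sum_cons, Finset.sum_map]
    simp only [lt_irrefl, if_false, zero_add]
    apply Finset.sum_congr rfl
    intro a ha
    have := Finset.HasAntidiagonal.mem_antidiagonal.1 ha
    have h3 : a.1 < k + 1 := by omega
    simp [h3]
  rw [h2] at h
  rw [map_add, PowerSeries.coeff_mul, PowerSeries.coeff_derivative]
  simp only [eSer, PowerSeries.coeff_mk]
  set S := ∑ a ∈ Finset.HasAntidiagonal.antidiagonal k,
      (-1) ^ a.1 * esymm (Fin n) ℚ a.1 * psum (Fin n) ℚ (a.2 + 1)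
  have h4 : ((-1 : MvPolynomial (Fin n) ℚ) ^ k) * (-1) ^ k = 1 := by
    rw [← mul_pow]; simp
  push_cast at h
  simp only [map_zero]
  linear_combination (-1) ^ (k + 1) * h - S * h4

/-- coefficientwise derivation -/
def dSer {A : Type*} [CommRing A] [Algebra ℚ A] (D : Derivation ℚ A A) (f : PowerSeries A) :
    PowerSeries A := PowerSeries.mk fun k => D (PowerSeries.coeff k f)

lemma dSer_add {A : Type*} [CommRing A] [Algebra ℚ A] (D : Derivation ℚ A A)
    (f g : PowerSeries A) : dSer D (f + g) = dSer D f + dSer D g := by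
  ext k; simp [dSer]

lemma dSer_mul {A : Type*} [CommRing A] [Algebra ℚ A] (D : Derivation ℚ A A)
    (f g : PowerSeries A) : dSer D (f * g) = dSer D f * g + f * dSer D g := by
  ext k
  simp only [dSer, PowerSeries.coeff_mk, PowerSeries.coeff_mul, map_add, map_sum,
    ← Finset.sum_add_distrib, Derivation.leibniz, smul_eq_mul]
  exact Finset.sum_congr rfl fun _ _ => by ring

lemma dSer_deriv {A : Type*} [CommRing A] [Algebra ℚ A] (D : Derivation ℚ A A)
    (f : PowerSeries A) :
    dSer D (PowerSeries.derivative A f) = PowerSeries.derivative A (dSer D f) := by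
  ext k
  have : D ((k : A) + 1) = 0 := by
    simp
  simp only [dSer, PowerSeries.coeff_mk, PowerSeries.coeff_derivative, Derivation.leibniz, this]
  simp [mul_comm]

lemma core {A : Type*} [CommRing A] [Algebra ℚ A] (D : Derivation ℚ A A)
    (E G Q : PowerSeries A) (hG : E * G = 1) (hQ : PowerSeries.derivative A E + E * Q = 0) :
    dSer D Q = - PowerSeries.derivative A (dSer D E * G) := by
  have h1 : dSer D (PowerSeries.derivative A E + E * Q) = 0 := by
    rw [hQ]; ext k; simp [dSer]
  rw [dSer_add, dSer_deriv, dSer_mul] at h1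
  have h2 : PowerSeries.derivative A (E * G) = 0 := by
    rw [hG]; exact PowerSeries.derivative_one
  rw [Derivation.leibniz, smul_eq_mul, smul_eq_mul] at h2 ⊢
  linear_combination G * h1 - dSer D Q * hG + dSer D E * G * h2 - dSer D E * G * G * hQ
    + (dSer D E * G * Q - dSer D E * PowerSeries.derivative A G) * hG

/-- universal coefficients -/
def yv (N : ℕ) : ℕ → MvPolynomial (Fin N) ℚ
  | 0 => 1
  | k + 1 => if h : k < N then X ⟨k, h⟩ else 0

/-- universal series -/
def ySer (N : ℕ) : PowerSeries (MvPolynomial (Fin N) ℚ) :=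
  PowerSeries.mk fun k => (-1) ^ k * yv N k

lemma map_ySer (N n : ℕ) (h : n ≤ N) :
    PowerSeries.map (MvPolynomial.aeval
      (fun j : Fin N => esymm (Fin n) ℚ ((j : ℕ) + 1))).toRingHom (ySer N) = eSer n := by
  ext1 k
  simp only [PowerSeries.coeff_map, ySer, eSer, PowerSeries.coeff_mk, map_mul, map_pow, map_neg,
    map_one]
  congr 1
  cases k with
  | zero => simp [yv]
  | succ k =>
    by_cases hk : k < N
    · simp [yv, hk]
    · simp only [yv, hk, dif_neg, not_false_eq_true, map_zero]
      rw [esymm, Finset.powersetCard_eq_empty.2 (by simp; omega), Finset.sum_empty]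

lemma map_deriv {A B : Type*} [CommRing A] [CommRing B] (f : A →+* B) (g : PowerSeries A) :
    PowerSeries.map f (PowerSeries.derivative A g)
      = PowerSeries.derivative B (PowerSeries.map f g) := by
  ext k; simp [PowerSeries.coeff_derivative]


/-- for `ν ≥ 1` and `r ≥ 0`, `𝓗^{(r)}_ν(0) = η_r`, in the explicit form
`((−1)^{ν+1}/(r+ν))·(∂H^{(r+ν)}/∂y_ν)(𝔰₁,…,𝔰_{r+ν}) = η_r` in `ℚ[α₁,…,αₙ]`.
(The variable `y_ν` corresponds to the index `ν−1 : Fin (r+ν)`.) -/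
theorem statement7 (n : ℕ) (hn : 1 ≤ n) (ν r : ℕ) (hν : 1 ≤ ν)
    (H : MvPolynomial (Fin (r + ν)) ℚ)
    (hH : ∀ N : ℕ, r + ν ≤ N →
        MvPolynomial.aeval (fun j : Fin (r + ν) => esymm (Fin N) ℚ ((j : ℕ) + 1)) H
          = psum (Fin N) ℚ (r + ν)) :
    C ((-1 : ℚ) ^ (ν + 1) / ((r + ν : ℕ) : ℚ))
        * MvPolynomial.aeval (fun k : Fin (r + ν) => esymm (Fin n) ℚ ((k : ℕ) + 1))
            (pderiv (⟨ν - 1, by omega⟩ : Fin (r + ν)) H)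
      = hsymm (Fin n) ℚ r := by
  set N := max n (r + ν) with hN
  have hnN : n ≤ N := le_max_left _ _
  have hmN : r + ν ≤ N := le_max_right _ _
  obtain ⟨G, hG⟩ : ∃ G, ySer N * G = 1 :=
    ⟨PowerSeries.invOfUnit (ySer N) 1, PowerSeries.mul_invOfUnit _ _ (by simp [ySer, yv])⟩
  set Q := -(PowerSeries.derivative _ (ySer N)) * G with hQd
  have hQ : PowerSeries.derivative _ (ySer N) + ySer N * Q = 0 := by
    rw [hQd]; linear_combination -(PowerSeries.derivative _ (ySer N)) * hG
  -- identify H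
  have hHQ : rename (Fin.castLE hmN) H = PowerSeries.coeff (r + ν - 1) Q := by
    apply esymmAlgHom_fin_injective (n := N) (m := N) ℚ le_rfl
    apply Subtype.ext
    rw [esymmAlgHom_apply, esymmAlgHom_apply, aeval_rename]
    have h1 := hH N hmN
    have h2 := congrArg (PowerSeries.map (MvPolynomial.aeval
      (fun j : Fin N => esymm (Fin N) ℚ ((j : ℕ) + 1))).toRingHom) hQ
    rw [map_add, map_mul, map_deriv, map_ySer N N le_rfl, map_zero] at h2
    have h3 := newton N
    have h4 := eSer_mul_hSer N
    have h5 : PowerSeries.map (MvPolynomial.aeval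
      (fun j : Fin N => esymm (Fin N) ℚ ((j : ℕ) + 1))).toRingHom Q
        = PowerSeries.mk (fun k => psum (Fin N) ℚ (k + 1)) := by
      set Q' := PowerSeries.map (MvPolynomial.aeval
        (fun j : Fin N => esymm (Fin N) ℚ ((j : ℕ) + 1))).toRingHom Q
      linear_combination PowerSeries.mk (fun k => hsymm (Fin N) ℚ k) * (h2 - h3)
        - (Q' - PowerSeries.mk (fun k => psum (Fin N) ℚ (k + 1))) * h4
    have h6 := congrArg (PowerSeries.coeff (r + ν - 1)) h5
    rw [PowerSeries.coeff_map, PowerSeries.coeff_mk, show r + ν - 1 + 1 = r + ν by omega] at h6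
    exact h1.trans h6.symm
  have hGn : PowerSeries.map (MvPolynomial.aeval
      (fun j : Fin N => esymm (Fin n) ℚ ((j : ℕ) + 1))).toRingHom G
      = PowerSeries.mk (fun k => hsymm (Fin n) ℚ k) := by
    have h2 := congrArg (PowerSeries.map (MvPolynomial.aeval
      (fun j : Fin N => esymm (Fin n) ℚ ((j : ℕ) + 1))).toRingHom) hG
    rw [map_mul, map_ySer N n hnN, map_one] at h2
    have h4 := eSer_mul_hSer n
    set G' := PowerSeries.map (MvPolynomial.aeval
      (fun j : Fin N => esymm (Fin n) ℚ ((j : ℕ) + 1))).toRingHom G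
    linear_combination PowerSeries.mk (fun k => hsymm (Fin n) ℚ k) * h2 - G' * h4
  set i0 : Fin (r + ν) := ⟨ν - 1, by omega⟩ with hi0
  have hD : dSer (pderiv (Fin.castLE hmN i0)) (ySer N)
      = PowerSeries.C ((-1) ^ ν) * PowerSeries.X ^ ν := by
    ext1 k
    rw [PowerSeries.coeff_C_mul, PowerSeries.coeff_X_pow]
    simp only [dSer, ySer, PowerSeries.coeff_mk]
    have hc : ((-1 : MvPolynomial (Fin N) ℚ) ^ k) = C ((-1) ^ k) := by simp
    rw [hc, pderiv_C_mul, ← hc]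
    cases k with
    | zero =>
      have : (0 : ℕ) ≠ ν := by omega
      simp [yv, this]
    | succ k =>
      by_cases hk : k + 1 = ν
      · subst hk
        have : k < N := by omega
        simp [yv, this, hi0, Fin.castLE]
      · by_cases hkN : k < N
        · have : (⟨k, hkN⟩ : Fin N) ≠ Fin.castLE hmN i0 := by
            intro h
            have := congrArg Fin.val h
            simp [hi0] at this
            omega
          simp [yv, hkN, hk, pderiv_X_of_ne this]
        · simp [yv, hkN, hk]
  have hcore := core (pderiv (Fin.castLE hmN i0)) (ySer N) G Q hG hQ
  have hc := congrArg (PowerSeries.coeff (r + ν - 1)) hcore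
  rw [hD, map_neg, PowerSeries.coeff_derivative, mul_assoc (PowerSeries.C _),
    PowerSeries.coeff_C_mul, show r + ν - 1 + 1 = r + ν by omega,
    PowerSeries.coeff_X_pow_mul, dSer, PowerSeries.coeff_mk, ← hHQ,
    pderiv_rename (Fin.castLE_injective hmN)] at hc
  have hm : ((r + ν - 1 : ℕ) : MvPolynomial (Fin N) ℚ) + 1 = C ((r + ν : ℕ) : ℚ) := by
    rw [map_natCast, ← Nat.cast_succ]; congr 1; omega
  rw [hm] at hc
  have hf := congrArg (MvPolynomial.aeval
      (fun j : Fin N => esymm (Fin n) ℚ ((j : ℕ) + 1))) hc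
  have hg := congrArg (PowerSeries.coeff r) hGn
  rw [PowerSeries.coeff_map, PowerSeries.coeff_mk] at hg
  have hg' : MvPolynomial.aeval (fun j : Fin N => esymm (Fin n) ℚ ((j : ℕ) + 1))
    (PowerSeries.coeff r G) = hsymm (Fin n) ℚ r := hg
  rw [aeval_rename] at hf
  simp only [map_neg, map_mul, map_pow, map_one, hg', aeval_C] at hf
  have hf' : MvPolynomial.aeval (fun k : Fin (r + ν) => esymm (Fin n) ℚ ((k : ℕ) + 1))
      (pderiv i0 H) = -((-1) ^ ν * hsymm (Fin n) ℚ r * C ((r + ν : ℕ) : ℚ)) := hf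
  rw [hf']
  have hne : ((r + ν : ℕ) : ℚ) ≠ 0 := by
    have : r + ν ≠ 0 := by omega
    exact_mod_cast this
  have h1 : C ((-1 : ℚ) ^ (ν + 1) / ((r + ν : ℕ) : ℚ)) * C ((r + ν : ℕ) : ℚ)
      = ((-1) ^ (ν + 1) : MvPolynomial (Fin n) ℚ) := by
    rw [← C_mul, div_mul_cancel₀ _ hne]; simp
  have h4 : ((-1 : MvPolynomial (Fin n) ℚ) ^ ν) * (-1) ^ ν = 1 := by
    rw [← mul_pow]; simp
  linear_combination -((-1) ^ ν * hsymm (Fin n) ℚ r) * h1 + hsymm (Fin n) ℚ r * h4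

end SQ
end
end
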